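/- arXiv:2005.06905 — 2 statements merged into one kernel-verified Lean document; each statement's English description precedes it below -/
import Mathlib

section
/- There exists a constant C > 0, depending only on α and T, such that for all t sufficiently near T (with max(0, T − 1/e) < t < T) one has ψ₃(t) := (2/b_t²)·√( ‖g_t‖⁴ + 2‖g_t ⊗₁ g_t‖² ) ≤ C/√|log(T−t)|; in fact ψ₃(t) ≤ C/λ_t^{3/4}. -/
open MeasureTheory Real Filter Topology

/-- `λ_t := |log(T−t)|/(2α−1)`. -/
noncomputable def lam (T α t : ℝ) : ℝ := |Real.log (T - t)| / (2 * α - 1)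

/-- The kernel `f_t`. -/
noncomputable def fker (T α t : ℝ) (u v : ℝ) : ℝ :=
  if u ∈ Set.Icc (0:ℝ) t ∧ v ∈ Set.Icc (0:ℝ) t then
    (1 / (2 * Real.sqrt (lam T α t))) * (T - max u v) ^ (α - 1) * (T - min u v) ^ (-α)
  else 0

/-- The kernel `g_t`. -/
noncomputable def gker (T α t : ℝ) (u v : ℝ) : ℝ :=
  if u ∈ Set.Icc (0:ℝ) t ∧ v ∈ Set.Icc (0:ℝ) t then
    (T - u) ^ (-α) * (T - v) ^ (-α) *
      ((T - max u v) ^ (2 * α - 1) - (T - t) ^ (2 * α - 1)) / |Real.log (T - t)|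
  else 0

/-- `⟨p,q⟩ := ∫_{[0,T]²} p(u,v) q(u,v) du dv`. -/
noncomputable def ip (T : ℝ) (p q : ℝ → ℝ → ℝ) : ℝ :=
  ∫ u in Set.Icc (0:ℝ) T, ∫ v in Set.Icc (0:ℝ) T, p u v * q u v

/-- `‖p‖² := ⟨p,p⟩`. -/
noncomputable def normSq (T : ℝ) (p : ℝ → ℝ → ℝ) : ℝ := ip T p p

/-- The contraction `(p ⊗₁ q)(x,y) := ∫₀^T p(x,u) q(y,u) du`. -/
noncomputable def contr (T : ℝ) (p q : ℝ → ℝ → ℝ) : ℝ → ℝ → ℝ :=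
  fun x y => ∫ u in Set.Icc (0:ℝ) T, p x u * q y u

/-- `b_t := (1/λ_t)·∫₀ᵗ ∫₀ˢ (T−s)^{2α−2}(T−u)^{−2α} du ds`. -/
noncomputable def bfun (T α t : ℝ) : ℝ :=
  (1 / lam T α t) *
    ∫ s in (0:ℝ)..t, ∫ u in (0:ℝ)..s, (T - s) ^ (2 * α - 2) * (T - u) ^ (-(2 * α))

/-- `A_{t,1}`. -/
noncomputable def A1 (T α t : ℝ) : ℝ :=
  (1 / (lam T α t) ^ 2) *
    ∫ x4 in (0:ℝ)..t, ∫ x3 in (0:ℝ)..x4, ∫ x2 in (0:ℝ)..x3, ∫ x1 in (0:ℝ)..x2,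
      (T - x4) ^ (2 * α - 2) * (T - x3) ^ (-1 : ℝ) * (T - x2) ^ (-1 : ℝ) *
        (T - x1) ^ (-(2 * α))

/-- `A_{t,2}`. -/
noncomputable def A2 (T α t : ℝ) : ℝ :=
  (1 / (2 * (lam T α t) ^ 2)) *
    ∫ x4 in (0:ℝ)..t, ∫ x2 in (0:ℝ)..x4, ∫ x3 in (0:ℝ)..x2, ∫ x1 in (0:ℝ)..x3,
      (T - x4) ^ (2 * α - 2) * (T - x2) ^ (2 * α - 2) * (T - x3) ^ (-(2 * α)) *
        (T - x1) ^ (-(2 * α))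

theorem sq_integral_mul_le_of_nonneg {X : Type*} [MeasurableSpace X] {μ : Measure X}
    {f g : X → ℝ} (hf0 : 0 ≤ f) (hg0 : 0 ≤ g) (hf : MemLp f 2 μ) (hg : MemLp g 2 μ) :
    (∫ x, f x * g x ∂μ) ^ 2 ≤ (∫ x, f x * f x ∂μ) * ∫ x, g x * g x ∂μ := by
  have h2 : ENNReal.ofReal 2 = 2 := by norm_num
  have key := integral_mul_le_Lp_mul_Lq_of_nonneg (μ := μ) (p := 2) (q := 2)
    Real.HolderConjugate.two_two (ae_of_all _ hf0) (ae_of_all _ hg0)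
    (by rwa [h2]) (by rwa [h2])
  have e : ∀ y : ℝ, y ^ (2 : ℝ) = y * y := fun y => by
    rw [Real.rpow_two, sq]
  simp only [e, ← Real.sqrt_eq_rpow] at key
  have hF : 0 ≤ ∫ x, f x * f x ∂μ := integral_nonneg fun x => mul_self_nonneg _
  have hG : 0 ≤ ∫ x, g x * g x ∂μ := integral_nonneg fun x => mul_self_nonneg _
  have h0 : 0 ≤ ∫ x, f x * g x ∂μ := integral_nonneg fun x => mul_nonneg (hf0 x) (hg0 x)
  calc (∫ x, f x * g x ∂μ) ^ 2
      ≤ (√(∫ x, f x * f x ∂μ) * √(∫ x, g x * g x ∂μ)) ^ 2 := by gcongr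
    _ = _ := by rw [mul_pow, Real.sq_sqrt hF, Real.sq_sqrt hG]

theorem integral_const_sub_rpow {T a b r : ℝ} (hab : a ≤ b) (hb : b < T) (hr : r ≠ -1) :
    ∫ x in a..b, (T - x) ^ r = ((T - a) ^ (r + 1) - (T - b) ^ (r + 1)) / (r + 1) := by
  rw [intervalIntegral.integral_comp_sub_left (fun x => x ^ r) T, integral_rpow]
  refine Or.inr ⟨hr, ?_⟩
  rw [Set.uIcc_of_le (by linarith), Set.mem_Icc]
  rintro ⟨h, -⟩
  linarith

theorem integral_const_sub_inv {T t : ℝ} (ht0 : 0 ≤ t) (htT : t < T) :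
    ∫ x in (0 : ℝ)..t, (T - x)⁻¹ = Real.log T - Real.log (T - t) := by
  rw [intervalIntegral.integral_comp_sub_left (fun x => x⁻¹) T, integral_inv, sub_zero,
    Real.log_div (by linarith) (by linarith)]
  rw [Set.uIcc_of_le (by linarith), Set.mem_Icc]
  rintro ⟨h, -⟩
  linarith

theorem continuousOn_const_sub_rpow {T b : ℝ} (hb : b < T) (r : ℝ) :
    ContinuousOn (fun x => (T - x) ^ r) (Set.Iic b) := by
  refine ContinuousOn.rpow_const (by fun_prop) fun x hx => Or.inl ?_
  have : x ≤ b := hx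
  linarith

theorem continuousOn_const_sub_inv {T b : ℝ} (hb : b < T) :
    ContinuousOn (fun x => (T - x)⁻¹) (Set.Iic b) := by
  refine ContinuousOn.inv₀ (by fun_prop) fun x hx => ?_
  have : x ≤ b := hx
  linarith

theorem gker_nonneg {T α t : ℝ} (hα : 1 / 2 < α) (htT : t < T) (u v : ℝ) :
    0 ≤ gker T α t u v := by
  unfold gker
  split_ifs with h
  · obtain ⟨⟨-, hu⟩, -, hv⟩ := h
    have hm : T - t ≤ T - max u v := by linarith [max_le hu hv]
    have h1 : (T - t) ^ (2 * α - 1) ≤ (T - max u v) ^ (2 * α - 1) :=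
      Real.rpow_le_rpow (by linarith) hm (by linarith)
    have h2 : 0 ≤ (T - u) ^ (-α) := Real.rpow_nonneg (by linarith) _
    have h3 : 0 ≤ (T - v) ^ (-α) := Real.rpow_nonneg (by linarith) _
    have h4 := sub_nonneg.2 h1
    positivity
  · exact le_rfl

theorem gker_comm (T α t u v : ℝ) : gker T α t u v = gker T α t v u := by
  unfold gker
  simp only [max_comm u v, mul_comm ((T - u) ^ (-α)), and_comm (a := u ∈ Set.Icc 0 t)]

/-- Dropping the subtracted term in `gker`: a bound by a product of powers. -/
theorem gker_le {T α t u v : ℝ} (hu0 : 0 ≤ u) (hut : u ≤ t) (hv0 : 0 ≤ v) (hvu : v ≤ u)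
    (htT : t < T) :
    gker T α t u v ≤ (T - u) ^ (α - 1) * (T - v) ^ (-α) / |Real.log (T - t)| := by
  have hTu : 0 < T - u := by linarith
  have h3 : 0 ≤ (T - v) ^ (-α) := Real.rpow_nonneg (by linarith) _
  have h2 : 0 ≤ (T - u) ^ (-α) := Real.rpow_nonneg (by linarith) _
  have h4 : 0 ≤ (T - t) ^ (2 * α - 1) := Real.rpow_nonneg (by linarith) _
  have e : (T - u) ^ (α - 1) = (T - u) ^ (-α) * (T - u) ^ (2 * α - 1) := by
    rw [← Real.rpow_add hTu]; congr 1; ring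
  rw [gker, if_pos ⟨⟨hu0, hut⟩, hv0, hvu.trans hut⟩, max_eq_left hvu, e]
  gcongr ?_ / _
  nlinarith [mul_nonneg (mul_nonneg h2 h3) h4]

theorem gker_mul_self_le {T α t u v : ℝ} (hα : 1 / 2 < α) (hu0 : 0 ≤ u) (hut : u ≤ t)
    (hv0 : 0 ≤ v) (hvu : v ≤ u) (htT : t < T) :
    gker T α t u v * gker T α t u v ≤
      (T - u) ^ (2 * α - 2) * (T - v) ^ (-(2 * α)) / |Real.log (T - t)| ^ 2 := by
  have hTu : 0 < T - u := by linarith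
  have hTv : 0 < T - v := by linarith
  have h := gker_le (α := α) hu0 hut hv0 hvu htT
  have h0 := gker_nonneg hα htT u v
  refine (mul_le_mul h h h0 (h0.trans h)).trans_eq ?_
  have e1 : (T - u) ^ (2 * α - 2) = (T - u) ^ (α - 1) * (T - u) ^ (α - 1) := by
    rw [← Real.rpow_add hTu]; congr 1; ring
  have e2 : (T - v) ^ (-(2 * α)) = (T - v) ^ (-α) * (T - v) ^ (-α) := by
    rw [← Real.rpow_add hTv]; congr 1; ring
  rw [e1, e2, div_mul_div_comm]
  congr 1 <;> ring

theorem measurable_gker (T α t x : ℝ) : Measurable (gker T α t x) := by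
  unfold gker
  refine Measurable.ite ?_ (by fun_prop) measurable_const
  by_cases hx : x ∈ Set.Icc 0 t <;> simp [hx, -Set.mem_Icc]

theorem memLp_gker {T α t : ℝ} (hα : 1 / 2 < α) (htT : t < T) (x : ℝ) :
    MemLp (gker T α t x) 2 (volume.restrict (Set.Icc 0 T)) := by
  by_cases hx : x ∈ Set.Icc 0 t
  swap
  · have h0 : gker T α t x = 0 := funext fun v => by simp [gker, hx, -Set.mem_Icc]
    rw [h0]
    exact MemLp.zero
  refine MemLp.of_bound (measurable_gker T α t x).aestronglyMeasurable
    ((T - x) ^ (-α) * (T - t) ^ (-α) * T ^ (2 * α - 1) / |Real.log (T - t)|)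
    (ae_of_all _ fun v => ?_)
  rw [Real.norm_of_nonneg (gker_nonneg hα htT x v)]
  by_cases h : x ∈ Set.Icc 0 t ∧ v ∈ Set.Icc 0 t
  · rw [gker, if_pos h]
    obtain ⟨⟨hx0, hx⟩, hv0, hv⟩ := h
    have hm : max x v ≤ t := max_le hx hv
    have hm0 : 0 ≤ max x v := hx0.trans (le_max_left _ _)
    have h2 : 0 ≤ (T - x) ^ (-α) := Real.rpow_nonneg (by linarith) _
    have h3 : (T - v) ^ (-α) ≤ (T - t) ^ (-α) :=
      Real.rpow_le_rpow_of_nonpos (by linarith) (by linarith) (by linarith)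
    have h4 : (T - max x v) ^ (2 * α - 1) ≤ T ^ (2 * α - 1) :=
      Real.rpow_le_rpow (by linarith) (by linarith) (by linarith)
    have h5 : 0 ≤ (T - t) ^ (2 * α - 1) := Real.rpow_nonneg (by linarith) _
    have h6 : (T - t) ^ (2 * α - 1) ≤ (T - max x v) ^ (2 * α - 1) :=
      Real.rpow_le_rpow (by linarith) (by linarith) (by linarith)
    have h7 : 0 ≤ (T - t) ^ (-α) := Real.rpow_nonneg (by linarith) _
    refine div_le_div_of_nonneg_right ?_ (abs_nonneg _)
    exact mul_le_mul (mul_le_mul_of_nonneg_left h3 h2) (by linarith) (by linarith)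
      (mul_nonneg h2 h7)
  · rw [gker, if_neg h]
    have h2 : 0 ≤ (T - x) ^ (-α) := Real.rpow_nonneg (by linarith [hx.2]) _
    have h3 : 0 ≤ (T - t) ^ (-α) := Real.rpow_nonneg (by linarith) _
    have h4 : 0 ≤ T ^ (2 * α - 1) := Real.rpow_nonneg (by linarith [hx.1, hx.2]) _
    positivity

/-- The square integral of a slice of `gker` is at most a multiple of `(T - x)⁻¹`. -/
theorem integral_gker_mul_self_le {T α t : ℝ} (hα : 1 / 2 < α) (htT : t < T) (x : ℝ) :
    ∫ v in Set.Icc 0 T, gker T α t x v * gker T α t x v ≤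
      (Set.Icc 0 t).indicator
        (fun x => 2 / ((2 * α - 1) * |Real.log (T - t)| ^ 2) * (T - x)⁻¹) x := by
  by_cases hx : x ∈ Set.Icc 0 t
  swap
  · simp [hx, gker, -Set.mem_Icc]
  rw [Set.indicator_of_mem hx]
  obtain ⟨hx0, hxt⟩ := hx
  set L := |Real.log (T - t)|
  have hTx : 0 < T - x := by linarith
  set A : ℝ → ℝ := fun v => (T - x) ^ (2 * α - 2) / L ^ 2 * (T - v) ^ (-(2 * α)) with hA
  set B : ℝ → ℝ := fun v => (T - x) ^ (-(2 * α)) / L ^ 2 * (T - v) ^ (2 * α - 2) with hB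
  have hA0 : ∀ v ≤ t, 0 ≤ A v := fun v hv => by
    have h1 : 0 ≤ (T - x) ^ (2 * α - 2) := Real.rpow_nonneg hTx.le _
    have h2 : 0 ≤ (T - v) ^ (-(2 * α)) := Real.rpow_nonneg (by linarith) _
    simp only [hA]; positivity
  have hB0 : ∀ v ≤ t, 0 ≤ B v := fun v hv => by
    have h1 : 0 ≤ (T - v) ^ (2 * α - 2) := Real.rpow_nonneg (by linarith) _
    have h2 : 0 ≤ (T - x) ^ (-(2 * α)) := Real.rpow_nonneg hTx.le _
    simp only [hB]; positivity
  have hAc : ContinuousOn A (Set.Icc 0 x) :=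
    (continuousOn_const.mul (continuousOn_const_sub_rpow (by linarith) _)).mono
      Set.Icc_subset_Iic_self
  have hBc : ContinuousOn B (Set.Icc x t) :=
    (continuousOn_const.mul (continuousOn_const_sub_rpow (by linarith) _)).mono
      Set.Icc_subset_Iic_self
  have hAi : Integrable ((Set.Icc 0 x).indicator A) (volume.restrict (Set.Icc 0 T)) :=
    ((integrable_indicator_iff measurableSet_Icc).2 hAc.integrableOn_Icc).restrict
  have hBi : Integrable ((Set.Icc x t).indicator B) (volume.restrict (Set.Icc 0 T)) :=
    ((integrable_indicator_iff measurableSet_Icc).2 hBc.integrableOn_Icc).restrict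
  have hle : ∀ v, gker T α t x v * gker T α t x v ≤
      (Set.Icc 0 x).indicator A v + (Set.Icc x t).indicator B v := by
    intro v
    have hnA : 0 ≤ (Set.Icc 0 x).indicator A v :=
      Set.indicator_apply_nonneg fun h => hA0 v (h.2.trans hxt)
    have hnB : 0 ≤ (Set.Icc x t).indicator B v :=
      Set.indicator_apply_nonneg fun h => hB0 v h.2
    by_cases hv : v ∈ Set.Icc 0 t
    · rcases le_total v x with hvx | hvx
      · refine le_trans ?_ (le_add_of_nonneg_right hnB)
        rw [Set.indicator_of_mem (show v ∈ Set.Icc 0 x from ⟨hv.1, hvx⟩)]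
        refine (gker_mul_self_le hα hx0 hxt hv.1 hvx htT).trans_eq ?_
        simp only [hA]; ring
      · refine le_trans ?_ (le_add_of_nonneg_left hnA)
        rw [Set.indicator_of_mem (show v ∈ Set.Icc x t from ⟨hvx, hv.2⟩), gker_comm]
        refine (gker_mul_self_le hα hv.1 hv.2 hx0 hvx htT).trans_eq ?_
        simp only [hB]; ring
    · simpa [gker, hv, -Set.mem_Icc] using add_nonneg hnA hnB
  have hmono : ∫ v in Set.Icc 0 T, gker T α t x v * gker T α t x v ≤
      ∫ v in Set.Icc 0 T, ((Set.Icc 0 x).indicator A v + (Set.Icc x t).indicator B v) :=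
    integral_mono_of_nonneg (ae_of_all _ fun v => mul_self_nonneg _) (hAi.add hBi)
      (ae_of_all _ hle)
  refine hmono.trans ?_
  rw [integral_add hAi hBi, setIntegral_indicator measurableSet_Icc,
    setIntegral_indicator measurableSet_Icc,
    Set.inter_eq_right.2 (Set.Icc_subset_Icc le_rfl (by linarith)),
    Set.inter_eq_right.2 (Set.Icc_subset_Icc hx0 htT.le),
    integral_Icc_eq_integral_Ioc, integral_Icc_eq_integral_Ioc,
    ← intervalIntegral.integral_of_le hx0, ← intervalIntegral.integral_of_le hxt]
  simp only [hA, hB, intervalIntegral.integral_const_mul]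
  rw [integral_const_sub_rpow hx0 (by linarith) (by linarith),
    integral_const_sub_rpow hxt htT (by linarith), sub_zero]
  have hT0 : 0 ≤ T ^ (-(2 * α) + 1) := Real.rpow_nonneg (by linarith) _
  have ht0 : 0 ≤ (T - t) ^ (2 * α - 2 + 1) := Real.rpow_nonneg (by linarith) _
  have e1 : (T - x) ^ (2 * α - 2) * (T - x) ^ (-(2 * α) + 1) = (T - x)⁻¹ := by
    rw [← Real.rpow_add hTx, ← Real.rpow_neg_one]; congr 1; ring
  have e2 : (T - x) ^ (-(2 * α)) * (T - x) ^ (2 * α - 2 + 1) = (T - x)⁻¹ := by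
    rw [← Real.rpow_add hTx, ← Real.rpow_neg_one]; congr 1; ring
  have hs : 0 < 2 * α - 1 := by linarith
  have p1 : 0 ≤ (T - x) ^ (2 * α - 2) := Real.rpow_nonneg hTx.le _
  have p2 : 0 ≤ (T - x) ^ (-(2 * α)) := Real.rpow_nonneg hTx.le _
  have b1 : (T - x) ^ (2 * α - 2) / L ^ 2 *
      ((T ^ (-(2 * α) + 1) - (T - x) ^ (-(2 * α) + 1)) / (-(2 * α) + 1)) ≤
      1 / ((2 * α - 1) * L ^ 2) * (T - x)⁻¹ := by
    have : (T - x) ^ (2 * α - 2) / L ^ 2 *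
      ((T ^ (-(2 * α) + 1) - (T - x) ^ (-(2 * α) + 1)) / (-(2 * α) + 1)) =
      1 / ((2 * α - 1) * L ^ 2) *
        ((T - x)⁻¹ - (T - x) ^ (2 * α - 2) * T ^ (-(2 * α) + 1)) := by
      rw [← e1, show -(2 * α) + 1 = -(2 * α - 1) by ring]
      generalize 2 * α - 1 = s at *
      rw [div_neg]
      simp only [div_eq_mul_inv, mul_inv]
      ring
    rw [this]
    gcongr
    linarith [mul_nonneg p1 hT0]
  have b2 : (T - x) ^ (-(2 * α)) / L ^ 2 *
      (((T - x) ^ (2 * α - 2 + 1) - (T - t) ^ (2 * α - 2 + 1)) / (2 * α - 2 + 1)) ≤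
      1 / ((2 * α - 1) * L ^ 2) * (T - x)⁻¹ := by
    have : (T - x) ^ (-(2 * α)) / L ^ 2 *
      (((T - x) ^ (2 * α - 2 + 1) - (T - t) ^ (2 * α - 2 + 1)) / (2 * α - 2 + 1)) =
      1 / ((2 * α - 1) * L ^ 2) *
        ((T - x)⁻¹ - (T - x) ^ (-(2 * α)) * (T - t) ^ (2 * α - 2 + 1)) := by
      rw [← e2, show 2 * α - 2 + 1 = 2 * α - 1 by ring]
      simp only [div_eq_mul_inv, mul_inv]
      ring
    rw [this]
    gcongr
    linarith [mul_nonneg p2 ht0]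
  refine (add_le_add b1 b2).trans_eq ?_
  ring

/-- If the square integrals of the slices of `p` are dominated by an integrable `H`, then
`‖p‖²` is at most the integral of `H`. -/
theorem normSq_le {T : ℝ} {p : ℝ → ℝ → ℝ} {H : ℝ → ℝ}
    (hH : IntegrableOn H (Set.Icc 0 T))
    (hpH : ∀ x, ∫ v in Set.Icc 0 T, p x v * p x v ≤ H x) :
    normSq T p ≤ ∫ x in Set.Icc 0 T, H x :=
  integral_mono_of_nonneg (ae_of_all _ fun _ => integral_nonneg fun _ => mul_self_nonneg _) hH
    (ae_of_all _ hpH)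

theorem normSq_nonneg (T : ℝ) (p : ℝ → ℝ → ℝ) : 0 ≤ normSq T p :=
  integral_nonneg fun _ => integral_nonneg fun _ => mul_self_nonneg _

theorem normSq_contr_le {T : ℝ} {p : ℝ → ℝ → ℝ} {H : ℝ → ℝ} (hp0 : ∀ x, 0 ≤ p x)
    (hp : ∀ x, MemLp (p x) 2 (volume.restrict (Set.Icc 0 T)))
    (hH : IntegrableOn H (Set.Icc 0 T))
    (hpH : ∀ x, ∫ v in Set.Icc 0 T, p x v * p x v ≤ H x) :
    normSq T (contr T p p) ≤ (∫ x in Set.Icc 0 T, H x) ^ 2 := by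
  have hI0 : ∀ x, 0 ≤ ∫ v in Set.Icc 0 T, p x v * p x v := fun x =>
    integral_nonneg fun _ => mul_self_nonneg _
  have hc : ∀ x y, contr T p p x y * contr T p p x y ≤ H x * H y := fun x y => by
    rw [← sq]
    exact (sq_integral_mul_le_of_nonneg (hp0 x) (hp0 y) (hp x) (hp y)).trans
      (mul_le_mul (hpH x) (hpH y) (hI0 y) ((hI0 x).trans (hpH x)))
  refine (normSq_le (H := fun x => H x * ∫ y in Set.Icc 0 T, H y) (hH.mul_const _)
    fun x => ?_).trans_eq ?_
  · rw [← integral_const_mul]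
    exact integral_mono_of_nonneg (ae_of_all _ fun _ => mul_self_nonneg _) (hH.const_mul _)
      (ae_of_all _ (hc x))
  · rw [integral_mul_const, sq]

theorem le_bfun {T α t : ℝ} (hα : 1 / 2 < α) (ht0 : 0 ≤ t) (htT : t < T) :
    (Real.log T - Real.log (T - t) - 1 / (2 * α - 1)) / |Real.log (T - t)| ≤ bfun T α t := by
  set s := 2 * α - 1 with hs_def
  have hs : 0 < s := by rw [hs_def]; linarith
  have hT : 0 < T := ht0.trans_lt htT
  have inner : Set.EqOn
      (fun x => ∫ u in (0 : ℝ)..x, (T - x) ^ (2 * α - 2) * (T - u) ^ (-(2 * α)))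
      (fun x => 1 / s * (T - x)⁻¹ - 1 / s * T ^ (-s) * (T - x) ^ (s - 1)) (Set.uIcc 0 t) := by
    intro x hx
    rw [Set.uIcc_of_le ht0] at hx
    have hTx : 0 < T - x := by linarith [hx.2]
    have e : (T - x)⁻¹ = (T - x) ^ (s - 1) * (T - x) ^ (-s) := by
      rw [← Real.rpow_add hTx, ← Real.rpow_neg_one]; congr 1; ring
    simp only [intervalIntegral.integral_const_mul]
    rw [integral_const_sub_rpow hx.1 (by linarith) (by linarith), sub_zero, e,
      show -(2 * α) + 1 = -s by rw [hs_def]; ring, show 2 * α - 2 = s - 1 by rw [hs_def]; ring,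
      div_neg]
    ring
  have hi1 : IntervalIntegrable (fun x => 1 / s * (T - x)⁻¹) volume 0 t := by
    refine ContinuousOn.intervalIntegrable ?_
    rw [Set.uIcc_of_le ht0]
    exact (continuousOn_const.mul (continuousOn_const_sub_inv htT)).mono
      Set.Icc_subset_Iic_self
  have hi2 : IntervalIntegrable (fun x => 1 / s * T ^ (-s) * (T - x) ^ (s - 1)) volume 0 t := by
    refine ContinuousOn.intervalIntegrable ?_
    rw [Set.uIcc_of_le ht0]
    exact (continuousOn_const.mul (continuousOn_const_sub_rpow htT _)).mono
      Set.Icc_subset_Iic_self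
  rw [bfun, lam, intervalIntegral.integral_congr inner, intervalIntegral.integral_sub hi1 hi2,
    intervalIntegral.integral_const_mul, intervalIntegral.integral_const_mul,
    integral_const_sub_inv ht0 htT, integral_const_sub_rpow ht0 htT (by linarith), sub_zero,
    sub_add_cancel, ← hs_def]
  have hTT : T ^ (-s) * T ^ s = 1 := by rw [← Real.rpow_add hT]; simp
  have hp : 0 ≤ T ^ (-s) * (T - t) ^ s :=
    mul_nonneg (Real.rpow_nonneg hT.le _) (Real.rpow_nonneg (by linarith) _)
  have e : 1 / (|Real.log (T - t)| / s) *
      (1 / s * (Real.log T - Real.log (T - t)) -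
        1 / s * T ^ (-s) * ((T ^ s - (T - t) ^ s) / s)) =
      (Real.log T - Real.log (T - t) - (T ^ (-s) * T ^ s - T ^ (-s) * (T - t) ^ s) / s) /
        |Real.log (T - t)| := by
    rw [one_div_div]
    field_simp
  rw [e, hTT]
  gcongr
  linarith

theorem integral_slice_bound {T t : ℝ} (ht0 : 0 ≤ t) (htT : t < T) (c : ℝ) :
    IntegrableOn ((Set.Icc 0 t).indicator fun x => c * (T - x)⁻¹) (Set.Icc 0 T) ∧
      ∫ x in Set.Icc 0 T, (Set.Icc 0 t).indicator (fun x => c * (T - x)⁻¹) x =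
        c * (Real.log T - Real.log (T - t)) := by
  constructor
  · have hc : ContinuousOn (fun x => c * (T - x)⁻¹) (Set.Icc 0 t) :=
      (continuousOn_const.mul (continuousOn_const_sub_inv htT)).mono Set.Icc_subset_Iic_self
    exact ((integrable_indicator_iff measurableSet_Icc).2 hc.integrableOn_Icc).integrableOn
  · rw [setIntegral_indicator measurableSet_Icc,
      Set.inter_eq_right.2 (Set.Icc_subset_Icc le_rfl htT.le), integral_Icc_eq_integral_Ioc,
      ← intervalIntegral.integral_of_le ht0, intervalIntegral.integral_const_mul,
      integral_const_sub_inv ht0 htT]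

/-- The bound with the rate `1 / |log (T - t)|`, from which both claimed rates follow. -/
theorem psi_le {T α t : ℝ} (hα : 1 / 2 < α) (ht0 : 0 ≤ t) (htT : t < T)
    (hneg : Real.log (T - t) < 0) (hlogT : Real.log T ≤ |Real.log (T - t)|)
    (hlarge : 2 * (1 / (2 * α - 1) - Real.log T) ≤ |Real.log (T - t)|) :
    (2 / (bfun T α t) ^ 2) *
        Real.sqrt ((normSq T (gker T α t)) ^ 2
          + 2 * normSq T (contr T (gker T α t) (gker T α t)))
      ≤ 64 / ((2 * α - 1) * |Real.log (T - t)|) := by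
  have hs : 0 < 2 * α - 1 := by linarith
  have hb := le_bfun hα ht0 htT
  obtain ⟨hHi, hHv⟩ := integral_slice_bound ht0 htT
    (2 / ((2 * α - 1) * |Real.log (T - t)| ^ 2))
  have hslice := integral_gker_mul_self_le hα htT
  have hN := normSq_le hHi hslice
  have hC := normSq_contr_le (fun x v => gker_nonneg hα htT x v) (memLp_gker hα htT) hHi hslice
  have hN0 := normSq_nonneg T (gker T α t)
  rw [hHv] at hN hC
  have hL : Real.log (T - t) = -|Real.log (T - t)| := by rw [abs_of_neg hneg, neg_neg]
  have hLpos : 0 < |Real.log (T - t)| := abs_pos.2 hneg.ne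
  rw [hL] at hb hN hC
  simp only [abs_neg, abs_abs] at hb hN hC
  set L := |Real.log (T - t)|
  set K := 4 / ((2 * α - 1) * L) with hK
  have hK0 : 0 < K := by positivity
  have hKle : 2 / ((2 * α - 1) * L ^ 2) * (Real.log T - -L) ≤ K := by
    calc 2 / ((2 * α - 1) * L ^ 2) * (Real.log T - -L)
        ≤ 2 / ((2 * α - 1) * L ^ 2) * (2 * L) := by gcongr; linarith
      _ = K := by rw [hK]; field_simp; norm_num
  have hlog : 0 ≤ 2 / ((2 * α - 1) * L ^ 2) * (Real.log T - -L) := hN0.trans hN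
  have hsqrt : Real.sqrt ((normSq T (gker T α t)) ^ 2
      + 2 * normSq T (contr T (gker T α t) (gker T α t))) ≤ 2 * K := by
    refine Real.sqrt_le_iff.2 ⟨by positivity, ?_⟩
    have h1 : (normSq T (gker T α t)) ^ 2 ≤ K ^ 2 := by gcongr; exact hN.trans hKle
    have h2 := hC.trans (pow_le_pow_left₀ hlog hKle 2)
    nlinarith
  have hb2 : 1 / 2 ≤ bfun T α t := by
    refine le_trans ?_ hb
    rw [le_div_iff₀ hLpos]
    linarith
  have hb3 : 2 / (bfun T α t) ^ 2 ≤ 8 := by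
    rw [div_le_iff₀ (by positivity)]
    nlinarith
  calc _ ≤ 8 * (2 * K) := mul_le_mul hb3 hsqrt (Real.sqrt_nonneg _) (by norm_num)
    _ = 64 / ((2 * α - 1) * L) := by rw [hK]; ring

theorem stmt_16 (T α : ℝ) (hT : 0 < T) (hα : 1 / 2 < α) :
    ∃ C > 0, ∃ t₀ : ℝ, max 0 (T - 1 / Real.exp 1) < t₀ ∧ t₀ < T ∧
      ∀ t : ℝ, t₀ < t → t < T →
        (2 / (bfun T α t) ^ 2) *
            Real.sqrt ((normSq T (gker T α t)) ^ 2
              + 2 * normSq T (contr T (gker T α t) (gker T α t)))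
          ≤ C / (lam T α t) ^ ((3 : ℝ) / 4)
        ∧
        (2 / (bfun T α t) ^ 2) *
            Real.sqrt ((normSq T (gker T α t)) ^ 2
              + 2 * normSq T (contr T (gker T α t) (gker T α t)))
          ≤ C / Real.sqrt |Real.log (T - t)| := by
  have hs : 0 < 2 * α - 1 := by linarith
  set s := 2 * α - 1 with hs_def
  set M := 2 + s + 2 * |Real.log T| + 2 / s with hM
  have hlogT := abs_nonneg (Real.log T)
  have hs2 : 0 < 2 / s := by positivity
  refine ⟨64 / s ^ 2 + 64 / s, by positivity, T - min (T / 2) (Real.exp (-M)), ?_, ?_, ?_⟩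
  · refine max_lt ?_ ?_
    · linarith [min_le_left (T / 2) (Real.exp (-M))]
    · have h1 : Real.exp (-M) < 1 / Real.exp 1 := by
        rw [one_div, ← Real.exp_neg, Real.exp_lt_exp]
        linarith
      linarith [min_le_right (T / 2) (Real.exp (-M))]
  · have : 0 < min (T / 2) (Real.exp (-M)) := lt_min (by positivity) (Real.exp_pos _)
    linarith
  intro t ht htT
  have ht0 : 0 ≤ t := by linarith [min_le_left (T / 2) (Real.exp (-M))]
  have hlog : Real.log (T - t) < -M := by
    rw [Real.log_lt_iff_lt_exp (by linarith)]
    linarith [min_le_right (T / 2) (Real.exp (-M))]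
  have hneg : Real.log (T - t) < 0 := by linarith
  have hLM : M ≤ |Real.log (T - t)| := by rw [abs_of_neg hneg]; linarith
  have hpsi := psi_le hα ht0 htT hneg (by linarith [le_abs_self (Real.log T)])
    (by rw [← hs_def, show 2 * (1 / s - Real.log T) = 2 / s - 2 * Real.log T by ring]
        linarith [neg_abs_le (Real.log T)])
  rw [lam, ← hs_def]
  rw [← hs_def] at hpsi
  set L := |Real.log (T - t)|
  have hL1 : 1 ≤ L := by linarith
  have hl1 : 1 ≤ L / s := by rw [one_le_div hs]; linarith
  constructor
  · have hpow : (L / s) ^ ((3 : ℝ) / 4) ≤ L / s := by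
      simpa using Real.rpow_le_rpow_of_exponent_le hl1 (show (3 : ℝ) / 4 ≤ 1 by norm_num)
    calc _ ≤ 64 / (s * L) := hpsi
      _ = 64 / s ^ 2 / (L / s) := by field_simp
      _ ≤ (64 / s ^ 2 + 64 / s) / (L / s) ^ ((3 : ℝ) / 4) := by
        gcongr
        exact le_add_of_nonneg_right (by positivity)
  · have hsqrt : √L ≤ L := Real.sqrt_le_iff.2 ⟨by linarith, by nlinarith⟩
    calc _ ≤ 64 / (s * L) := hpsi
      _ = 64 / s / L := by rw [div_div]
      _ ≤ (64 / s ^ 2 + 64 / s) / √L := by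
        gcongr
        exact le_add_of_nonneg_left (by positivity)
end

section
/- As t ↑ T, √λ_t · ‖f_t ⊗₁ f_t‖ converges to √5/(2(2α−1)); in particular ‖f_t ⊗₁ f_t‖ → 0 as t ↑ T. -/
open MeasureTheory Real Filter Topology

theorem integral_sub_rpow {T a b r : ℝ} (ha : a < T) (hb : b < T) (hr : r ≠ -1) :
    ∫ v in a..b, (T - v) ^ r = ((T - a) ^ (r + 1) - (T - b) ^ (r + 1)) / (r + 1) := by
  rw [intervalIntegral.integral_comp_sub_left (fun x => x ^ r) T, integral_rpow]
  refine Or.inr ⟨hr, fun h => ?_⟩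
  have := Set.mem_uIcc.1 h
  rcases this with h | h <;> linarith [h.1, h.2]

theorem integral_sub_inv {T a b : ℝ} (ha : a < T) (hb : b < T) :
    ∫ v in a..b, (T - v)⁻¹ = log (T - a) - log (T - b) := by
  rw [intervalIntegral.integral_comp_sub_left (fun x => x⁻¹) T,
    integral_inv_of_pos (by linarith) (by linarith), log_div (by linarith) (by linarith)]

theorem integral_sub_rpow_mul_log_quadratic {T a b κ m B C : ℝ} (ha : a < T) (hb : b < T)
    (hκ : κ ≠ 0) :
    ∫ v in a..b, (T - v) ^ (-κ - 1) * ((κ * (log (T - v) - m)) ^ 2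
        + (B - 2) * (κ * (log (T - v) - m)) + (C - B)) =
      ((T - b) ^ (-κ) * ((κ * (log (T - b) - m)) ^ 2 + B * (κ * (log (T - b) - m)) + C)
        - (T - a) ^ (-κ) * ((κ * (log (T - a) - m)) ^ 2 + B * (κ * (log (T - a) - m)) + C))
        / κ := by
  have hpos : ∀ v ∈ Set.uIcc a b, 0 < T - v := by
    intro v hv
    rcases Set.mem_uIcc.1 hv with h | h <;> linarith [h.1, h.2]
  rw [sub_div]
  refine intervalIntegral.integral_eq_sub_of_hasDerivAt
    (f := fun v => (T - v) ^ (-κ) *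
      ((κ * (log (T - v) - m)) ^ 2 + B * (κ * (log (T - v) - m)) + C) / κ) ?_ ?_
  · intro v hv
    have h := hpos v hv
    have hd : HasDerivAt (fun v => T - v) (-1) v := by
      simpa using (hasDerivAt_id v).const_sub T
    have hw : HasDerivAt (fun v => κ * (log (T - v) - m)) (κ * (-1 / (T - v))) v :=
      ((hd.log h.ne').sub_const m).const_mul κ
    have hr := hd.rpow_const (p := -κ) (Or.inl h.ne')
    refine ((hr.mul (((hw.pow 2).add (hw.const_mul B)).add_const C)).div_const κ).congr_deriv ?_
    simp only [Pi.add_apply, Pi.pow_apply]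
    have e : (T - v) ^ (-κ) = (T - v) ^ (-κ - 1) * (T - v) := by
      rw [← rpow_add_one h.ne']; ring_nf
    rw [e]
    field_simp
    ring
  · apply ContinuousOn.intervalIntegrable
    have hc : ContinuousOn (fun v => T - v) (Set.uIcc a b) := by fun_prop
    have hl := hc.log fun v hv => (hpos v hv).ne'
    exact (hc.rpow_const fun v hv => Or.inl (hpos v hv).ne').mul (by fun_prop)

/-- The kernel `f_t` without its normalisation and its cut-off. -/
noncomputable def bareKernel (T α u v : ℝ) : ℝ :=
  (T - max u v) ^ (α - 1) * (T - min u v) ^ (-α)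

/-- The leading part of the contraction of the bare kernel with itself. -/
noncomputable def mainPart (T α u v : ℝ) : ℝ :=
  bareKernel T α u v * (2 + (2 * α - 1) * (log (T - min u v) - log (T - max u v)))

/-- The part of the contraction of the bare kernel due to the ends of the interval. -/
noncomputable def boundaryPart (T α t u v : ℝ) : ℝ :=
  (T - u) ^ (α - 1) * (T - v) ^ (α - 1) * T ^ (1 - 2 * α)
    + (T - u) ^ (-α) * (T - v) ^ (-α) * (T - t) ^ (2 * α - 1)

theorem bareKernel_comm (T α u v : ℝ) : bareKernel T α u v = bareKernel T α v u := by
  simp only [bareKernel, max_comm, min_comm]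

theorem bareKernel_of_le {T α u v : ℝ} (h : u ≤ v) :
    bareKernel T α u v = (T - v) ^ (α - 1) * (T - u) ^ (-α) := by
  simp only [bareKernel, max_eq_right h, min_eq_left h]

theorem mainPart_comm (T α u v : ℝ) : mainPart T α u v = mainPart T α v u := by
  simp only [mainPart, bareKernel, max_comm, min_comm]

theorem continuousOn_bareKernel (T α : ℝ) :
    ContinuousOn (Function.uncurry (bareKernel T α)) (Set.Iio T ×ˢ Set.Iio T) := by
  refine ContinuousOn.mul (ContinuousOn.rpow_const (by fun_prop) ?_)
    (ContinuousOn.rpow_const (by fun_prop) ?_)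
  · rintro ⟨u, v⟩ ⟨hu, hv⟩
    exact Or.inl (sub_pos.2 (max_lt hu hv)).ne'
  · rintro ⟨u, v⟩ ⟨hu, hv⟩
    exact Or.inl (sub_pos.2 (min_lt_of_left_lt hu)).ne'

theorem continuousOn_mainPart (T α : ℝ) :
    ContinuousOn (Function.uncurry (mainPart T α)) (Set.Iio T ×ˢ Set.Iio T) := by
  have h1 : ContinuousOn (fun p : ℝ × ℝ => log (T - min p.1 p.2)) (Set.Iio T ×ˢ Set.Iio T) :=
    ContinuousOn.log (by fun_prop) fun p hp => (sub_pos.2 (min_lt_of_left_lt hp.1)).ne'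
  have h2 : ContinuousOn (fun p : ℝ × ℝ => log (T - max p.1 p.2)) (Set.Iio T ×ˢ Set.Iio T) :=
    ContinuousOn.log (by fun_prop) fun p hp => (sub_pos.2 (max_lt hp.1 hp.2)).ne'
  exact (continuousOn_bareKernel T α).mul
    (continuousOn_const.add (continuousOn_const.mul (h1.sub h2)))

theorem continuousOn_sub_rpow (T r : ℝ) : ContinuousOn (fun u => (T - u) ^ r) (Set.Iio T) :=
  ContinuousOn.rpow_const (by fun_prop) fun _ hu => Or.inl (sub_pos.2 hu).ne'

theorem continuousOn_sub_rpow_mul_sub_rpow (T r : ℝ) :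
    ContinuousOn (fun p : ℝ × ℝ => (T - p.1) ^ r * (T - p.2) ^ r) (Set.Iio T ×ˢ Set.Iio T) :=
  ((continuousOn_sub_rpow T r).comp continuousOn_fst fun _ hp => hp.1).mul
    ((continuousOn_sub_rpow T r).comp continuousOn_snd fun _ hp => hp.2)

theorem continuousOn_boundaryPart (T α t : ℝ) :
    ContinuousOn (Function.uncurry (boundaryPart T α t)) (Set.Iio T ×ˢ Set.Iio T) :=
  ((continuousOn_sub_rpow_mul_sub_rpow T (α - 1)).mul continuousOn_const).add
    ((continuousOn_sub_rpow_mul_sub_rpow T (-α)).mul continuousOn_const)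

theorem integral_bareKernel_mul_of_le {T α t x y : ℝ} (hα : 1 / 2 < α) (ht : t < T)
    (hx : 0 ≤ x) (hxy : x ≤ y) (hy : y ≤ t) :
    ∫ u in (0 : ℝ)..t, bareKernel T α x u * bareKernel T α y u =
      (mainPart T α x y - boundaryPart T α t x y) / (2 * α - 1) := by
  have hβ : 2 * α - 1 ≠ 0 := by linarith
  have hxT : 0 < T - x := by linarith
  have hyT : 0 < T - y := by linarith
  have hc : ContinuousOn (fun u => bareKernel T α x u * bareKernel T α y u) (Set.Icc 0 t) := by
    refine ContinuousOn.mul ?_ ?_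
    · exact (continuousOn_bareKernel T α).comp (f := fun u => (x, u)) (by fun_prop)
        fun u hu => ⟨by simp only [Set.mem_Iio]; linarith, by
          simp only [Set.mem_Iio]; linarith [hu.2]⟩
    · exact (continuousOn_bareKernel T α).comp (f := fun u => (y, u)) (by fun_prop)
        fun u hu => ⟨by simp only [Set.mem_Iio]; linarith, by
          simp only [Set.mem_Iio]; linarith [hu.2]⟩
  have hi : ∀ a b : ℝ, 0 ≤ a → a ≤ b → b ≤ t → IntervalIntegrable
      (fun u => bareKernel T α x u * bareKernel T α y u) volume a b := fun a b h1 h2 h3 =>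
    (hc.mono (Set.Icc_subset_Icc h1 h3)).intervalIntegrable_of_Icc h2
  rw [← intervalIntegral.integral_add_adjacent_intervals (hi 0 y le_rfl (hx.trans hxy) hy)
      (hi y t (hx.trans hxy) hy le_rfl),
    ← intervalIntegral.integral_add_adjacent_intervals (hi 0 x le_rfl hx (hxy.trans hy))
      (hi x y hx hxy hy)]
  have e1 : ∫ u in (0 : ℝ)..x, bareKernel T α x u * bareKernel T α y u =
      (T - x) ^ (α - 1) * (T - y) ^ (α - 1) *
        ((T ^ (1 - 2 * α) - (T - x) ^ (1 - 2 * α)) / (1 - 2 * α)) := by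
    have : ∫ v in (0 : ℝ)..x, (T - v) ^ (-2 * α) =
        (T ^ (1 - 2 * α) - (T - x) ^ (1 - 2 * α)) / (1 - 2 * α) := by
      rw [integral_sub_rpow (by linarith) (by linarith) (by intro h; apply hβ; linarith)]
      ring_nf
    rw [← this, ← intervalIntegral.integral_const_mul]
    refine intervalIntegral.integral_congr fun u hu => ?_
    rw [Set.uIcc_of_le hx] at hu
    have hu0 : 0 < T - u := by linarith [hu.2]
    rw [bareKernel_comm, bareKernel_of_le hu.2, bareKernel_comm T α y,
      bareKernel_of_le (hu.2.trans hxy), show -2 * α = -α + -α by ring, rpow_add hu0]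
    ring
  have e2 : ∫ u in x..y, bareKernel T α x u * bareKernel T α y u =
      (T - x) ^ (-α) * (T - y) ^ (α - 1) * (log (T - x) - log (T - y)) := by
    rw [← integral_sub_inv (by linarith) (by linarith), ← intervalIntegral.integral_const_mul]
    refine intervalIntegral.integral_congr fun u hu => ?_
    rw [Set.uIcc_of_le hxy] at hu
    have hu0 : 0 < T - u := by linarith [hu.2]
    rw [bareKernel_of_le hu.1, bareKernel_comm T α y,
      bareKernel_of_le hu.2, ← rpow_neg_one (T - u), show (-1 : ℝ) = (α - 1) + -α by ring,
      rpow_add hu0]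
    ring
  have e3 : ∫ u in y..t, bareKernel T α x u * bareKernel T α y u =
      (T - x) ^ (-α) * (T - y) ^ (-α) *
        (((T - y) ^ (2 * α - 1) - (T - t) ^ (2 * α - 1)) / (2 * α - 1)) := by
    have : ∫ v in y..t, (T - v) ^ (2 * α - 2) =
        ((T - y) ^ (2 * α - 1) - (T - t) ^ (2 * α - 1)) / (2 * α - 1) := by
      rw [integral_sub_rpow (by linarith) (by linarith) (by intro h; apply hβ; linarith)]
      ring_nf
    rw [← this, ← intervalIntegral.integral_const_mul]
    refine intervalIntegral.integral_congr fun u hu => ?_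
    rw [Set.uIcc_of_le hy] at hu
    have hu0 : 0 < T - u := by linarith [hu.2]
    rw [bareKernel_of_le (hxy.trans hu.1), bareKernel_of_le hu.1,
      show 2 * α - 2 = (α - 1) + (α - 1) by ring, rpow_add hu0]
    ring
  have p1 : (T - x) ^ (-α) = (T - x) ^ (α - 1) * (T - x) ^ (1 - 2 * α) := by
    rw [← rpow_add hxT]; ring_nf
  have p2 : (T - y) ^ (α - 1) = (T - y) ^ (-α) * (T - y) ^ (2 * α - 1) := by
    rw [← rpow_add hyT]; ring_nf
  rw [e1, e2, e3, mainPart, bareKernel_of_le hxy, boundaryPart, max_eq_right hxy,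
    min_eq_left hxy]
  rw [show (1 - 2 * α) = -(2 * α - 1) by ring] at *
  rw [p1]
  generalize (T - y) ^ (-α) = Y at *
  generalize (T - y) ^ (2 * α - 1) = Z at *
  rw [p2]
  generalize (T - x) ^ (α - 1) = X
  generalize 2 * α - 1 = β at *
  field_simp
  ring

theorem integral_bareKernel_mul {T α t x y : ℝ} (hα : 1 / 2 < α) (ht : t < T)
    (hx : x ∈ Set.Icc 0 t) (hy : y ∈ Set.Icc 0 t) :
    ∫ u in (0 : ℝ)..t, bareKernel T α x u * bareKernel T α y u =
      (mainPart T α x y - boundaryPart T α t x y) / (2 * α - 1) := by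
  rcases le_total x y with h | h
  · exact integral_bareKernel_mul_of_le hα ht hx.1 h hy.2
  · have := integral_bareKernel_mul_of_le hα ht hy.1 h hx.2
    rw [mainPart_comm, show boundaryPart T α t x y = boundaryPart T α t y x by
      simp only [boundaryPart]; ring, ← this]
    simp only [mul_comm]

/-- The integral over one variable, arranged so that `integral_sub_rpow_mul_log_quadratic` with
`B = 8` and `C = 18` integrates the result over the other variable. -/
theorem integral_mainPart_sq_section {T α t u : ℝ} (hα : 1 / 2 < α) (ht : t < T)
    (hu : u ∈ Set.Icc 0 t) :
    ∫ v in (0 : ℝ)..t, mainPart T α u v ^ 2 =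
      (20 * (T - u)⁻¹
        - T ^ (-(2 * α - 1)) * ((T - u) ^ (-(-(2 * α - 1)) - 1) *
          ((-(2 * α - 1) * (log (T - u) - log T)) ^ 2
            + (8 - 2) * (-(2 * α - 1) * (log (T - u) - log T)) + (18 - 8)))
        - (T - t) ^ (2 * α - 1) * ((T - u) ^ (-(2 * α - 1) - 1) *
          (((2 * α - 1) * (log (T - u) - log (T - t))) ^ 2
            + (8 - 2) * ((2 * α - 1) * (log (T - u) - log (T - t))) + (18 - 8))))
      / (2 * α - 1) := by
  have hβ : 2 * α - 1 ≠ 0 := by linarith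
  obtain ⟨hu0, hut⟩ := hu
  have huT : 0 < T - u := by linarith
  have hc : ContinuousOn (fun v => mainPart T α u v ^ 2) (Set.Icc 0 t) :=
    ((continuousOn_mainPart T α).comp (f := fun v => (u, v)) (by fun_prop)
        fun v hv => ⟨by simp only [Set.mem_Iio]; linarith, by
          simp only [Set.mem_Iio]; linarith [hv.2]⟩).pow 2
  have hi : ∀ a b : ℝ, 0 ≤ a → a ≤ b → b ≤ t → IntervalIntegrable
      (fun v => mainPart T α u v ^ 2) volume a b := fun a b h1 h2 h3 =>
    (hc.mono (Set.Icc_subset_Icc h1 h3)).intervalIntegrable_of_Icc h2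
  rw [← intervalIntegral.integral_add_adjacent_intervals (hi 0 u le_rfl hu0 hut)
      (hi u t hu0 hut le_rfl)]
  have e1 : ∫ v in (0 : ℝ)..u, mainPart T α u v ^ 2 = (T - u) ^ (2 * α - 1 - 1) *
      ∫ v in (0 : ℝ)..u, (T - v) ^ (-(2 * α - 1) - 1) *
        (((2 * α - 1) * (log (T - v) - log (T - u))) ^ 2
        + (6 - 2) * ((2 * α - 1) * (log (T - v) - log (T - u))) + (10 - 6)) := by
    rw [← intervalIntegral.integral_const_mul]
    refine intervalIntegral.integral_congr fun v hv => ?_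
    rw [Set.uIcc_of_le hu0] at hv
    have hv0 : 0 < T - v := by linarith [hv.2]
    rw [mainPart_comm, mainPart, bareKernel_of_le hv.2, max_eq_right hv.2, min_eq_left hv.2,
      show 2 * α - 1 - 1 = (α - 1) + (α - 1) by ring, rpow_add huT,
      show -(2 * α - 1) - 1 = -α + -α by ring, rpow_add hv0]
    ring
  have e2 : ∫ v in u..t, mainPart T α u v ^ 2 = (T - u) ^ (-(2 * α - 1) - 1) *
      ∫ v in u..t, (T - v) ^ (-(-(2 * α - 1)) - 1) *
        ((-(2 * α - 1) * (log (T - v) - log (T - u))) ^ 2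
        + (6 - 2) * (-(2 * α - 1) * (log (T - v) - log (T - u))) + (10 - 6)) := by
    rw [← intervalIntegral.integral_const_mul]
    refine intervalIntegral.integral_congr fun v hv => ?_
    rw [Set.uIcc_of_le hut] at hv
    have hv0 : 0 < T - v := by linarith [hv.2]
    rw [mainPart, bareKernel_of_le hv.1, max_eq_right hv.1, min_eq_left hv.1,
      show - -(2 * α - 1) - 1 = (α - 1) + (α - 1) by ring, rpow_add hv0,
      show -(2 * α - 1) - 1 = -α + -α by ring, rpow_add huT]
    ring
  rw [e1, e2, integral_sub_rpow_mul_log_quadratic (by linarith) (by linarith) hβ,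
    integral_sub_rpow_mul_log_quadratic (by linarith) (by linarith) (neg_ne_zero.2 hβ)]
  generalize 2 * α - 1 = β at *
  simp only [neg_neg, sub_zero]
  have q1 : (T - u) ^ (β - 1) = (T - u) ^ β * (T - u)⁻¹ := by
    rw [rpow_sub_one huT.ne']; rfl
  have q2 : (T - u) ^ (-β - 1) = ((T - u) ^ β)⁻¹ * (T - u)⁻¹ := by
    rw [rpow_sub_one huT.ne', rpow_neg huT.le]; rfl
  have q3 := (rpow_pos_of_pos huT β).ne'
  rw [q1, q2, rpow_neg huT.le]
  field_simp
  ring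

theorem integral_mainPart_sq {T α t : ℝ} (hα : 1 / 2 < α) (ht0 : 0 ≤ t) (ht : t < T) :
    ∫ p in Set.Icc 0 t ×ˢ Set.Icc 0 t, mainPart T α p.1 p.2 ^ 2 =
      20 * (log T - log (T - t)) / (2 * α - 1) - 2 / (2 * α - 1) ^ 2 * (18 -
        exp (-((2 * α - 1) * (log T - log (T - t)))) *
          (((2 * α - 1) * (log T - log (T - t))) ^ 2
            + 8 * ((2 * α - 1) * (log T - log (T - t))) + 18)) := by
  have hβ : 2 * α - 1 ≠ 0 := by linarith
  have hsub : Set.Icc 0 t ⊆ Set.Iio T := fun x hx => hx.2.trans_lt ht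
  have hint : IntegrableOn (fun p : ℝ × ℝ => mainPart T α p.1 p.2 ^ 2)
      (Set.Icc 0 t ×ˢ Set.Icc 0 t) :=
    (((continuousOn_mainPart T α).mono (Set.prod_mono hsub hsub)).pow 2).integrableOn_compact
      (isCompact_Icc.prod isCompact_Icc)
  rw [Measure.volume_eq_prod] at hint ⊢
  rw [setIntegral_prod _ hint]
  simp only [integral_Icc_eq_integral_Ioc, ← intervalIntegral.integral_of_le ht0]
  rw [intervalIntegral.integral_congr (fun u hu => integral_mainPart_sq_section hα ht
    (by rwa [Set.uIcc_of_le ht0] at hu))]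
  have hs : 0 < T - t := sub_pos.2 ht
  have hT : 0 < T := ht0.trans_lt ht
  have hc : ContinuousOn (fun v => T - v) (Set.Icc 0 t) := by fun_prop
  have hne : ∀ v ∈ Set.Icc 0 t, T - v ≠ 0 := fun v hv => (sub_pos.2 (hsub hv)).ne'
  have hl := hc.log hne
  have hr : ∀ r : ℝ, ContinuousOn (fun v => (T - v) ^ r) (Set.Icc 0 t) := fun r =>
    hc.rpow_const fun v hv => Or.inl (hne v hv)
  have i1 : IntervalIntegrable (fun v => 20 * (T - v)⁻¹) volume 0 t :=
    (continuousOn_const.mul (hc.inv₀ hne)).intervalIntegrable_of_Icc ht0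
  have i2 : ∀ c κ m : ℝ, IntervalIntegrable (fun v => c * ((T - v) ^ (-κ - 1) *
      ((κ * (log (T - v) - m)) ^ 2 + (8 - 2) * (κ * (log (T - v) - m)) + (18 - 8))))
      volume 0 t := fun c κ m =>
    ContinuousOn.intervalIntegrable_of_Icc ht0 (by
      have := hr (-κ - 1)
      fun_prop)
  rw [intervalIntegral.integral_div, intervalIntegral.integral_sub (i1.sub (i2 _ _ _)) (i2 _ _ _),
    intervalIntegral.integral_sub i1 (i2 _ _ _)]
  simp only [intervalIntegral.integral_const_mul]
  rw [integral_sub_inv hT ht, integral_sub_rpow_mul_log_quadratic hT ht hβ,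
    integral_sub_rpow_mul_log_quadratic hT ht (neg_ne_zero.2 hβ)]
  generalize 2 * α - 1 = β at *
  simp only [neg_neg, sub_zero]
  have q : exp (-(β * (log T - log (T - t)))) = (T - t) ^ β * (T ^ β)⁻¹ := by
    rw [← rpow_neg hT.le, rpow_def_of_pos hT, rpow_def_of_pos hs, ← exp_add]; ring_nf
  have q3 := (rpow_pos_of_pos hT β).ne'
  have q4 := (rpow_pos_of_pos hs β).ne'
  rw [q, rpow_neg hT.le, rpow_neg hs.le]
  field_simp
  ring

theorem integral_boundaryPart_sq_le {T α t : ℝ} (hα : 1 / 2 < α) (ht0 : 0 ≤ t) (ht : t < T) :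
    ∫ p in Set.Icc 0 t ×ˢ Set.Icc 0 t, boundaryPart T α t p.1 p.2 ^ 2 ≤
      4 / (2 * α - 1) ^ 2 := by
  have hβ : 0 < 2 * α - 1 := by linarith
  have hs : 0 < T - t := sub_pos.2 ht
  have hT : 0 < T := ht0.trans_lt ht
  have hsub : Set.Icc 0 t ⊆ Set.Iio T := fun x hx => hx.2.trans_lt ht
  have hint : ∀ {F : ℝ × ℝ → ℝ}, ContinuousOn F (Set.Iio T ×ˢ Set.Iio T) →
      IntegrableOn F (Set.Icc 0 t ×ˢ Set.Icc 0 t) := fun hF =>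
    (hF.mono (Set.prod_mono hsub hsub)).integrableOn_compact (isCompact_Icc.prod isCompact_Icc)
  have hprod : ∀ r : ℝ, r ≠ -1 → ∫ p in Set.Icc 0 t ×ˢ Set.Icc 0 t,
      (T - p.1) ^ r * (T - p.2) ^ r = ((T ^ (r + 1) - (T - t) ^ (r + 1)) / (r + 1)) ^ 2 := by
    intro r hr
    rw [Measure.volume_eq_prod,
      setIntegral_prod_mul (fun x => (T - x) ^ r) (fun x => (T - x) ^ r),
      integral_Icc_eq_integral_Ioc, ← intervalIntegral.integral_of_le ht0,
      integral_sub_rpow hT ht hr, sub_zero, sq]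
  have hle : ∀ p ∈ Set.Icc 0 t ×ˢ Set.Icc 0 t, boundaryPart T α t p.1 p.2 ^ 2 ≤
      2 * (T ^ (1 - 2 * α)) ^ 2 * ((T - p.1) ^ (2 * α - 2) * (T - p.2) ^ (2 * α - 2)) +
      2 * ((T - t) ^ (2 * α - 1)) ^ 2 * ((T - p.1) ^ (-2 * α) * (T - p.2) ^ (-2 * α)) := by
    rintro ⟨u, v⟩ ⟨hu, hv⟩
    have hu0 : 0 < T - u := sub_pos.2 (hsub hu)
    have hv0 : 0 < T - v := sub_pos.2 (hsub hv)
    simp only [boundaryPart]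
    rw [show 2 * α - 2 = (α - 1) + (α - 1) by ring, show -2 * α = -α + -α by ring,
      rpow_add hu0, rpow_add hv0, rpow_add hu0, rpow_add hv0]
    refine add_sq_le.trans (le_of_eq ?_)
    ring
  have hi1 : IntegrableOn (fun p : ℝ × ℝ => 2 * (T ^ (1 - 2 * α)) ^ 2 *
      ((T - p.1) ^ (2 * α - 2) * (T - p.2) ^ (2 * α - 2))) (Set.Icc 0 t ×ˢ Set.Icc 0 t) :=
    hint (continuousOn_const.mul (continuousOn_sub_rpow_mul_sub_rpow T _))
  have hi2 : IntegrableOn (fun p : ℝ × ℝ => 2 * ((T - t) ^ (2 * α - 1)) ^ 2 *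
      ((T - p.1) ^ (-2 * α) * (T - p.2) ^ (-2 * α))) (Set.Icc 0 t ×ˢ Set.Icc 0 t) :=
    hint (continuousOn_const.mul (continuousOn_sub_rpow_mul_sub_rpow T _))
  refine (setIntegral_mono_on (hint ((continuousOn_boundaryPart T α t).pow 2)) (hi1.add hi2)
    (measurableSet_Icc.prod measurableSet_Icc) hle).trans ?_
  simp only [Pi.add_apply]
  rw [integral_add hi1 hi2, integral_const_mul, integral_const_mul,
    hprod _ (by linarith), hprod _ (by linarith), show 2 * α - 2 + 1 = 2 * α - 1 by ring,
    show -2 * α + 1 = -(2 * α - 1) by ring, show 1 - 2 * α = -(2 * α - 1) by ring]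
  generalize 2 * α - 1 = β at *
  have hst : (T - t) ^ β ≤ T ^ β := rpow_le_rpow hs.le (by linarith) hβ.le
  have hsp := rpow_pos_of_pos hs β
  have hTp := rpow_pos_of_pos hT β
  rw [rpow_neg hT.le, rpow_neg hs.le]
  generalize (T - t) ^ β = b at *
  generalize T ^ β = a at *
  have h1 : 2 * a⁻¹ ^ 2 * ((a - b) / β) ^ 2 + 2 * b ^ 2 * ((a⁻¹ - b⁻¹) / -β) ^ 2 =
      4 * ((a - b) / a) ^ 2 / β ^ 2 := by
    field_simp
    ring
  rw [h1]
  have h2 : ((a - b) / a) ^ 2 ≤ 1 :=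
    pow_le_one₀ (div_nonneg (by linarith) hTp.le) ((div_le_one hTp).2 (by linarith))
  gcongr
  linarith

theorem fker_of_mem {T α t u v : ℝ} (hu : u ∈ Set.Icc 0 t) (hv : v ∈ Set.Icc 0 t) :
    fker T α t u v = 1 / (2 * sqrt (lam T α t)) * bareKernel T α u v := by
  rw [fker, if_pos ⟨hu, hv⟩, bareKernel, mul_assoc]

theorem lam_nonneg {α : ℝ} (hα : 1 / 2 < α) (T t : ℝ) : 0 ≤ lam T α t :=
  div_nonneg (abs_nonneg _) (by linarith)

theorem contr_fker_of_mem {T α t x y : ℝ} (hα : 1 / 2 < α) (ht : t < T)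
    (hx : x ∈ Set.Icc 0 t) (hy : y ∈ Set.Icc 0 t) :
    contr T (fker T α t) (fker T α t) x y = 1 / (4 * lam T α t * (2 * α - 1)) *
      (mainPart T α x y - boundaryPart T α t x y) := by
  have h0 : ∀ u ∈ Set.Icc 0 T \ Set.Icc 0 t, fker T α t x u * fker T α t y u = 0 := by
    intro u hu
    rw [fker, if_neg fun h => hu.2 h.2, zero_mul]
  rw [contr, setIntegral_eq_of_subset_of_forall_sdiff_eq_zero measurableSet_Icc
    (Set.Icc_subset_Icc_right ht.le) h0,
    setIntegral_congr_fun measurableSet_Icc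
      (g := fun u => 1 / (4 * lam T α t) * (bareKernel T α x u * bareKernel T α y u)),
    integral_const_mul, integral_Icc_eq_integral_Ioc,
    ← intervalIntegral.integral_of_le (hx.1.trans hx.2), integral_bareKernel_mul hα ht hx hy]
  · generalize 2 * α - 1 = β
    ring
  · intro u hu
    simp only
    rw [fker_of_mem hx hu, fker_of_mem hy hu]
    have h2 : 1 / (4 * lam T α t) =
        1 / (2 * sqrt (lam T α t)) * (1 / (2 * sqrt (lam T α t))) := by
      rw [one_div_mul_one_div, mul_mul_mul_comm, mul_self_sqrt (lam_nonneg hα T t)]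
      norm_num
    rw [h2]
    ring

theorem contr_fker_of_notMem {T α t x y : ℝ} (h : ¬(x ∈ Set.Icc 0 t ∧ y ∈ Set.Icc 0 t)) :
    contr T (fker T α t) (fker T α t) x y = 0 := by
  rw [contr, integral_eq_zero_of_ae]
  refine Eventually.of_forall fun u => ?_
  rw [not_and_or] at h
  rcases h with h | h
  · simp only [fker, h, false_and, if_false, zero_mul, Pi.zero_apply]
  · simp only [fker, h, false_and, if_false, mul_zero, Pi.zero_apply]

theorem normSq_contr_fker {T α t : ℝ} (hα : 1 / 2 < α) (ht : t < T) :
    normSq T (contr T (fker T α t) (fker T α t)) = (1 / (4 * lam T α t * (2 * α - 1))) ^ 2 *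
      ∫ p in Set.Icc 0 t ×ˢ Set.Icc 0 t,
        (mainPart T α p.1 p.2 - boundaryPart T α t p.1 p.2) ^ 2 := by
  have hsub : Set.Icc 0 t ⊆ Set.Iio T := fun x hx => hx.2.trans_lt ht
  have hint : IntegrableOn
      (fun p : ℝ × ℝ => (mainPart T α p.1 p.2 - boundaryPart T α t p.1 p.2) ^ 2)
      (Set.Icc 0 t ×ˢ Set.Icc 0 t) :=
    ((((continuousOn_mainPart T α).sub (continuousOn_boundaryPart T α t)).mono
      (Set.prod_mono hsub hsub)).pow 2).integrableOn_compact
      (isCompact_Icc.prod isCompact_Icc)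
  rw [Measure.volume_eq_prod] at hint ⊢
  rw [setIntegral_prod _ hint, ← integral_const_mul, normSq, ip]
  have hss : Set.Icc 0 t ⊆ Set.Icc 0 T := Set.Icc_subset_Icc_right ht.le
  rw [setIntegral_eq_of_subset_of_forall_sdiff_eq_zero measurableSet_Icc hss]
  · refine setIntegral_congr_fun measurableSet_Icc fun x hx => ?_
    simp only
    rw [← integral_const_mul,
      setIntegral_eq_of_subset_of_forall_sdiff_eq_zero measurableSet_Icc hss]
    · refine setIntegral_congr_fun measurableSet_Icc fun y hy => ?_
      rw [contr_fker_of_mem hα ht hx hy]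
      ring
    · intro y hy
      rw [contr_fker_of_notMem fun h => hy.2 h.2, zero_mul]
  · intro x hx
    simp only [contr_fker_of_notMem fun h => hx.2 h.1, zero_mul, integral_zero]

theorem abs_sub_sq_sub_sq_le (a b : ℝ) {ε : ℝ} (hε : 0 < ε) :
    |(a - b) ^ 2 - a ^ 2| ≤ ε * a ^ 2 + (1 + 1 / ε) * b ^ 2 := by
  have h1 : 0 ≤ (ε * a - b) ^ 2 / ε := by positivity
  have h2 : 0 ≤ (ε * a + b) ^ 2 / ε := by positivity
  have e1 : (ε * a - b) ^ 2 / ε = ε * a ^ 2 - 2 * a * b + 1 / ε * b ^ 2 := by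
    field_simp
    ring
  have e2 : (ε * a + b) ^ 2 / ε = ε * a ^ 2 + 2 * a * b + 1 / ε * b ^ 2 := by
    field_simp
    ring
  rw [abs_le]
  constructor <;> nlinarith [sq_nonneg b]

theorem abs_integral_sub_integral_mainPart_sq_le {T α t ε : ℝ} (hα : 1 / 2 < α) (ht0 : 0 ≤ t)
    (ht : t < T) (hε : 0 < ε) :
    |(∫ p in Set.Icc 0 t ×ˢ Set.Icc 0 t,
        (mainPart T α p.1 p.2 - boundaryPart T α t p.1 p.2) ^ 2)
      - ∫ p in Set.Icc 0 t ×ˢ Set.Icc 0 t, mainPart T α p.1 p.2 ^ 2| ≤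
      ε * (∫ p in Set.Icc 0 t ×ˢ Set.Icc 0 t, mainPart T α p.1 p.2 ^ 2)
        + (1 + 1 / ε) * (4 / (2 * α - 1) ^ 2) := by
  have hsub : Set.Icc 0 t ⊆ Set.Iio T := fun x hx => hx.2.trans_lt ht
  have hint : ∀ {F : ℝ × ℝ → ℝ}, ContinuousOn F (Set.Iio T ×ˢ Set.Iio T) →
      IntegrableOn F (Set.Icc 0 t ×ˢ Set.Icc 0 t) := fun hF =>
    (hF.mono (Set.prod_mono hsub hsub)).integrableOn_compact (isCompact_Icc.prod isCompact_Icc)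
  have i1 : IntegrableOn (fun p : ℝ × ℝ =>
      (mainPart T α p.1 p.2 - boundaryPart T α t p.1 p.2) ^ 2) (Set.Icc 0 t ×ˢ Set.Icc 0 t) :=
    hint (((continuousOn_mainPart T α).sub (continuousOn_boundaryPart T α t)).pow 2)
  have i2 : IntegrableOn (fun p : ℝ × ℝ => mainPart T α p.1 p.2 ^ 2)
      (Set.Icc 0 t ×ˢ Set.Icc 0 t) := hint ((continuousOn_mainPart T α).pow 2)
  have i3 : IntegrableOn (fun p : ℝ × ℝ => boundaryPart T α t p.1 p.2 ^ 2)
      (Set.Icc 0 t ×ˢ Set.Icc 0 t) := hint ((continuousOn_boundaryPart T α t).pow 2)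
  rw [← integral_sub i1 i2]
  refine abs_integral_le_integral_abs.trans ?_
  refine (integral_mono (i1.sub i2).abs ((i2.const_mul ε).add (i3.const_mul (1 + 1 / ε)))
    fun p => abs_sub_sq_sub_sq_le _ _ hε).trans ?_
  simp only [Pi.add_apply]
  rw [integral_add (i2.const_mul ε) (i3.const_mul _), integral_const_mul, integral_const_mul]
  gcongr
  exact integral_boundaryPart_sq_le hα ht0 ht

theorem tendsto_log_sub_nhdsLT (T : ℝ) : Tendsto (fun t => log (T - t)) (𝓝[<] T) atBot := by
  refine tendsto_log_nhdsGT_zero.comp (tendsto_nhdsWithin_iff.2 ⟨?_, ?_⟩)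
  · have : Tendsto (fun t => T - t) (𝓝 T) (𝓝 (T - T)) := by
      exact (continuous_const.sub continuous_id).tendsto T
    rw [sub_self] at this
    exact this.mono_left nhdsWithin_le_nhds
  · filter_upwards [self_mem_nhdsWithin] with t ht
    exact sub_pos.2 (Set.mem_Iio.1 ht)

theorem tendsto_abs_log_sub_nhdsLT (T : ℝ) :
    Tendsto (fun t => |log (T - t)|) (𝓝[<] T) atTop :=
  tendsto_abs_atBot_atTop.comp (tendsto_log_sub_nhdsLT T)

theorem eventually_abs_log_sub_eq (T : ℝ) :
    ∀ᶠ t in 𝓝[<] T, |log (T - t)| = -log (T - t) := by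
  filter_upwards [(tendsto_log_sub_nhdsLT T).eventually_le_atBot 0] with t ht
  exact abs_of_nonpos ht

theorem tendsto_exp_neg_mul_quadratic (B C : ℝ) :
    Tendsto (fun w => exp (-w) * (w ^ 2 + B * w + C)) atTop (𝓝 0) := by
  have h (n : ℕ) := tendsto_pow_mul_exp_neg_atTop_nhds_zero n
  have := ((h 2).add ((h 1).const_mul B)).add ((h 0).const_mul C)
  simp only [mul_zero, add_zero] at this
  refine this.congr fun w => ?_
  ring

theorem tendsto_integral_mainPart_sq_div {T α : ℝ} (hT : 0 < T) (hα : 1 / 2 < α) :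
    Tendsto (fun t => (∫ p in Set.Icc 0 t ×ˢ Set.Icc 0 t, mainPart T α p.1 p.2 ^ 2)
      / |log (T - t)|) (𝓝[<] T) (𝓝 (20 / (2 * α - 1))) := by
  have hβ : 0 < 2 * α - 1 := by linarith
  have hL := tendsto_abs_log_sub_nhdsLT T
  have hinv := tendsto_inv_atTop_zero.comp hL
  have hW : Tendsto (fun t => (2 * α - 1) * (log T - log (T - t))) (𝓝[<] T) atTop :=
    (tendsto_atTop_add_const_left _ (log T)
      (tendsto_neg_atBot_atTop.comp (tendsto_log_sub_nhdsLT T))).const_mul_atTop hβ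
  have hq := (tendsto_exp_neg_mul_quadratic 8 18).comp hW
  have key := ((hinv.const_mul (log T)).add_const 1).const_mul (20 / (2 * α - 1))
  have key2 := ((hq.const_sub 18).const_mul (2 / (2 * α - 1) ^ 2)).mul hinv
  have := key.sub key2
  simp only [mul_zero, zero_add, mul_one, sub_zero] at this
  refine this.congr' ?_
  filter_upwards [self_mem_nhdsWithin, mem_nhdsWithin_of_mem_nhds (lt_mem_nhds hT),
    eventually_abs_log_sub_eq T, hL.eventually_gt_atTop 0] with t ht ht0 habs hpos
  rw [integral_mainPart_sq hα ht0.le ht]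
  simp only [Function.comp_apply]
  rw [habs] at hpos ⊢
  have hne : log (T - t) ≠ 0 := by linarith
  generalize exp (-((2 * α - 1) * (log T - log (T - t)))) = z
  generalize 2 * α - 1 = β at *
  field_simp
  ring

theorem tendsto_integral_sub_sq_div {T α : ℝ} (hT : 0 < T) (hα : 1 / 2 < α) :
    Tendsto (fun t => (∫ p in Set.Icc 0 t ×ˢ Set.Icc 0 t,
        (mainPart T α p.1 p.2 - boundaryPart T α t p.1 p.2) ^ 2)
      / |log (T - t)|) (𝓝[<] T) (𝓝 (20 / (2 * α - 1))) := by
  have hL := tendsto_abs_log_sub_nhdsLT T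
  have hinv := tendsto_inv_atTop_zero.comp hL
  have hsinv := tendsto_inv_atTop_zero.comp (tendsto_sqrt_atTop.comp hL)
  have hJ := tendsto_integral_mainPart_sq_div hT hα
  have hbound := (hsinv.mul hJ).add ((hinv.add hsinv).mul_const (4 / (2 * α - 1) ^ 2))
  simp only [zero_mul, add_zero] at hbound
  have hdiff := squeeze_zero_norm' (f := fun t => (∫ p in Set.Icc 0 t ×ˢ Set.Icc 0 t,
        (mainPart T α p.1 p.2 - boundaryPart T α t p.1 p.2) ^ 2) / |log (T - t)| -
        (∫ p in Set.Icc 0 t ×ˢ Set.Icc 0 t, mainPart T α p.1 p.2 ^ 2) / |log (T - t)|)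
        ?_ hbound
  · simpa using hdiff.add hJ
  · filter_upwards [self_mem_nhdsWithin, mem_nhdsWithin_of_mem_nhds (lt_mem_nhds hT),
      hL.eventually_gt_atTop 0] with t ht ht0 hpos
    have hs := sqrt_pos.2 hpos
    rw [← sub_div, norm_eq_abs, abs_div, abs_abs, div_le_iff₀ hpos]
    refine (abs_integral_sub_integral_mainPart_sq_le hα ht0.le ht (inv_pos.2 hs)).trans
      (le_of_eq ?_)
    simp only [Function.comp_apply]
    generalize (∫ p in Set.Icc 0 t ×ˢ Set.Icc 0 t, mainPart T α p.1 p.2 ^ 2) = J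
    generalize 4 / (2 * α - 1) ^ 2 = E
    have hsq := sq_sqrt hpos.le
    generalize sqrt |log (T - t)| = r at *
    rw [← hsq]
    field_simp

theorem tendsto_lam {α : ℝ} (hα : 1 / 2 < α) (T : ℝ) : Tendsto (lam T α) (𝓝[<] T) atTop :=
  (tendsto_abs_log_sub_nhdsLT T).atTop_div_const (by linarith)

theorem tendsto_lam_mul_normSq_contr_fker {T α : ℝ} (hT : 0 < T) (hα : 1 / 2 < α) :
    Tendsto (fun t => lam T α t * normSq T (contr T (fker T α t) (fker T α t)))
      (𝓝[<] T) (𝓝 (5 / (2 * (2 * α - 1)) ^ 2)) := by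
  have hβ : 2 * α - 1 ≠ 0 := by linarith
  have h := (tendsto_integral_sub_sq_div hT hα).const_mul (1 / (16 * (2 * α - 1)))
  rw [show 1 / (16 * (2 * α - 1)) * (20 / (2 * α - 1)) = 5 / (2 * (2 * α - 1)) ^ 2 by
    field_simp; norm_num] at h
  refine h.congr' ?_
  filter_upwards [self_mem_nhdsWithin,
    (tendsto_abs_log_sub_nhdsLT T).eventually_gt_atTop 0] with t ht hpos
  rw [normSq_contr_fker hα ht, lam]
  have hne := hpos.ne'
  generalize |log (T - t)| = L at *
  generalize 2 * α - 1 = β at *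
  field_simp
  ring

theorem stmt_17 (T α : ℝ) (hT : 0 < T) (hα : 1 / 2 < α) :
    Tendsto (fun t => Real.sqrt (lam T α t) *
        Real.sqrt (normSq T (contr T (fker T α t) (fker T α t))))
      (𝓝[<] T) (𝓝 (Real.sqrt 5 / (2 * (2 * α - 1))))
    ∧
    Tendsto (fun t => Real.sqrt (normSq T (contr T (fker T α t) (fker T α t))))
      (𝓝[<] T) (𝓝 0) := by
  have hβ : 0 < 2 * α - 1 := by linarith
  have hmain : Tendsto (fun t => Real.sqrt (lam T α t) *
      Real.sqrt (normSq T (contr T (fker T α t) (fker T α t))))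
      (𝓝[<] T) (𝓝 (Real.sqrt 5 / (2 * (2 * α - 1)))) := by
    have h := (tendsto_lam_mul_normSq_contr_fker hT hα).sqrt
    rw [sqrt_div (by norm_num), sqrt_sq (by positivity)] at h
    exact h.congr fun t => sqrt_mul (lam_nonneg hα T t) _
  refine ⟨hmain, ?_⟩
  have hinv := tendsto_inv_atTop_zero.comp (tendsto_sqrt_atTop.comp (tendsto_lam hα T))
  have h := hinv.mul hmain
  rw [zero_mul] at h
  refine h.congr' ?_
  filter_upwards [(tendsto_lam hα T).eventually_gt_atTop 0] with t ht
  have := (sqrt_pos.2 ht).ne'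
  simp only [Function.comp_apply]
  rw [inv_mul_cancel_left₀ this]
end
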